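/- Let m ≥ 2 be an integer and Δ > 1. There is a constant C such that: for every real 2m×m matrix J with J^1 invertible such that A_j := Π_j J is Δ-regular for each j ∈ 𝒞, for every convex tree 𝒯 of dyadic cubes in ℝ^m, for every measurable c : (0,∞) → ℂ with |c| ≤ 1 almost everywhere, every u ∈ ℝ^{2m}, every 1 ≤ i ≤ m, and for every tuple (F_j)_{j∈𝒞} of compactly supported bounded measurable functions on ℝ^m such that for some j₀ ∈ 𝒞 the support of F_{j₀} ∘ A_{j₀} is disjoint from Q*_𝒯, one has |Λ_𝒯((F_j)_{j∈𝒞})| ≤ C |Q_𝒯| ∏_{j∈𝒞} sup_{Q dyadic cube with Q*_𝒯 ⊆ Q*} [F_j ∘ A_j]_{Q*}. -/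

import Mathlib

open MeasureTheory Matrix
open scoped ENNReal NNReal BigOperators

noncomputable section

namespace SBL

/-- The set of corners of the `m`-dimensional cube: functions `{1,…,m} → {0,1}`. -/
abbrev Corner (m : ℕ) := Fin m → Fin 2

/-- Index type for `ℝ^{2m}`: coordinates `x^0_i` (left) and `x^1_i` (right). -/
abbrev Idx (m : ℕ) := Fin m ⊕ Fin m

/-- The coordinate of `ℝ^{2m}` selected by the corner `j` at position `i`. -/
def sel {m : ℕ} (j : Corner m) (i : Fin m) : Idx m :=
  if j i = 0 then Sum.inl i else Sum.inr i

/-- The projection `Π_j : ℝ^{2m} → ℝ^m`, `Π_j x = (x_1^{j(1)},…,x_m^{j(m)})`. -/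
def proj {m : ℕ} (j : Corner m) (x : Idx m → ℝ) : Fin m → ℝ := fun i => x (sel j i)

/-- The projection `Π_j` as an `m × 2m` matrix. -/
def projM {m : ℕ} (j : Corner m) : Matrix (Fin m) (Idx m) ℝ :=
  Matrix.of fun i k => if k = sel j i then 1 else 0

/-- `A_j := Π_j J`, the `m × m` matrix obtained by applying `Π_j` to (the columns of) a
`2m × m` matrix `J`, i.e. selecting rows of `J` according to the corner `j`. -/
def Amat {m : ℕ} (J : Matrix (Idx m) (Fin m) ℝ) (j : Corner m) : Matrix (Fin m) (Fin m) ℝ :=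
  Matrix.of fun i k => J (sel j i) k

/-- Euclidean norm on a finite pi type. -/
def en {ι : Type*} [Fintype ι] (x : ι → ℝ) : ℝ := Real.sqrt (∑ i, (x i) ^ 2)

/-- Operator norm of a matrix with respect to the Euclidean norms. -/
def opNorm {ι κ : Type*} [Fintype ι] [Fintype κ] [DecidableEq κ] (A : Matrix ι κ ℝ) : ℝ :=
  ‖LinearMap.toContinuousLinearMap (Matrix.toEuclideanLin A)‖

/-- `Δ`-regularity of a square matrix: `max(‖A‖, |det A|⁻¹) ≤ Δ` (in particular `det A ≠ 0`). -/
def IsReg {m : ℕ} (Δ : ℝ) (A : Matrix (Fin m) (Fin m) ℝ) : Prop :=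
  opNorm A ≤ Δ ∧ A.det ≠ 0 ∧ |A.det|⁻¹ ≤ Δ

/-- A Calderón–Zygmund kernel of order `n` in `ℝ^m`, given by its multiplier `K̂` on
`ℝ^m ∖ {0}`: it is `n` times continuously differentiable there and satisfies the symbol
estimates `‖D^k K̂(η)‖ ≤ |η|^{-k}` for all `k ≤ n`. -/
def IsCZ {m : ℕ} (n : ℕ) (Khat : (Fin m → ℝ) → ℂ) : Prop :=
  ContDiffOn ℝ n Khat {0}ᶜ ∧
  ∀ k : ℕ, k ≤ n → ∀ η : Fin m → ℝ, η ≠ 0 →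
    ‖iteratedFDerivWithin ℝ k Khat {0}ᶜ η‖ ≤ (en η) ^ (-(k : ℝ))

/-- Fourier transform of a (nice) function on `ℝ^{2m}`. -/
def fourierT {m : ℕ} (φ : (Idx m → ℝ) → ℝ) (ξ : Idx m → ℝ) : ℂ :=
  ∫ x : Idx m → ℝ, Complex.exp (-2 * Real.pi * Complex.I * (∑ k, x k * ξ k)) * (φ x : ℂ)

/-- The principal value `p.v. ∫_{ℝ^{2m}} (∏_j F_j(Π_j x)) K(Πx) dx`, defined as
`∫_{ℝ^m} φ̂(−Π^T η) K̂(η) dη` with `φ = ∏_j F_j ∘ Π_j`. -/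
def pv {m : ℕ} (P : Matrix (Fin m) (Idx m) ℝ) (Khat : (Fin m → ℝ) → ℂ)
    (F : Corner m → (Fin m → ℝ) → ℝ) : ℂ :=
  ∫ η : Fin m → ℝ, fourierT (fun x => ∏ j, F j (proj j x)) (-(P.transpose.mulVec η)) * Khat η

/-- Upper `m×m` block `J^0` of a `2m×m` matrix. -/
def Jb0 {m : ℕ} (J : Matrix (Idx m) (Fin m) ℝ) : Matrix (Fin m) (Fin m) ℝ :=
  J.submatrix Sum.inl id

/-- Lower `m×m` block `J^1` of a `2m×m` matrix. -/
def Jb1 {m : ℕ} (J : Matrix (Idx m) (Fin m) ℝ) : Matrix (Fin m) (Fin m) ℝ :=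
  J.submatrix Sum.inr id

/-- `Π^J := (I, −J^0 (J^1)⁻¹)`. -/
def PiJ {m : ℕ} (J : Matrix (Idx m) (Fin m) ℝ) : Matrix (Fin m) (Idx m) ℝ :=
  Matrix.fromCols 1 (-(Jb0 J * (Jb1 J)⁻¹))

/-- The dyadic cube with parameters `Q = (k, n)`: `∏_i [2^k n_i, 2^k (n_i+1))`. -/
def dC {m : ℕ} (Q : ℤ × (Fin m → ℤ)) : Set (Fin m → ℝ) :=
  {x | ∀ i, (2:ℝ)^Q.1 * (Q.2 i : ℝ) ≤ x i ∧ x i < (2:ℝ)^Q.1 * ((Q.2 i : ℝ) + 1)}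

/-- `Q*`: the cube with the same center as `Q` and three times the side length. -/
def dCstar {m : ℕ} (Q : ℤ × (Fin m → ℤ)) : Set (Fin m → ℝ) :=
  {x | ∀ i, (2:ℝ)^Q.1 * ((Q.2 i : ℝ) - 1) ≤ x i ∧ x i < (2:ℝ)^Q.1 * ((Q.2 i : ℝ) + 2)}

/-- A (1/2-)sparse collection of dyadic cubes. -/
def IsSparse {m : ℕ} (S : Set (ℤ × (Fin m → ℤ))) : Prop :=
  ∀ Q ∈ S,
    (∑' Q' : {q : ℤ × (Fin m → ℤ) // q ∈ S ∧ dC q ⊆ dC Q}, volume (dC Q'.val)) ≤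
      2 * volume (dC Q)

/-- The average `[F]_S := (|S|⁻¹ ∫_S |F|^{2^{m-1}})^{2^{1-m}}`. -/
def avg {m : ℕ} (S : Set (Fin m → ℝ)) (F : (Fin m → ℝ) → ℝ) : ℝ :=
  (((volume S).toReal)⁻¹ * ∫ x in S, |F x| ^ (2^(m-1) : ℕ)) ^ ((2:ℝ) ^ ((1:ℤ) - (m:ℤ)))

/-- The closed axis-parallel box `∏_i [a_i, b_i]`. -/
def box {m : ℕ} (a b : Fin m → ℝ) : Set (Fin m → ℝ) := {x | ∀ i, a i ≤ x i ∧ x i ≤ b i}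

/-- Reciprocal eccentricity `ε_R = (min_i |I_i|)/(max_i |I_i|)` of the box `∏_i [a_i,b_i]`. -/
def ecc {m : ℕ} (a b : Fin m → ℝ) : ℝ := (⨅ i, (b i - a i)) / (⨆ i, (b i - a i))

/-- Modified strong maximal function evaluated on a set `S`:
`sup { (ε_R^α)^{2^{1-m}} [F]_R : R ∈ ℛ, S ⊆ R }` (as an extended real). -/
def Mal {m : ℕ} (α : ℝ) (F : (Fin m → ℝ) → ℝ) (S : Set (Fin m → ℝ)) : ℝ≥0∞ :=
  ⨆ (a : Fin m → ℝ) (b : Fin m → ℝ) (_ : ∀ i, a i < b i) (_ : S ⊆ box a b),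
    ENNReal.ofReal ((ecc a b ^ α) ^ ((2:ℝ) ^ ((1:ℤ) - (m:ℤ))) * avg (box a b) F)

/-- `M_α(F)(A𝒯) := sup_{Q ∈ 𝒯} M_α(F)(AQ)`. -/
def MalTree {m : ℕ} (α : ℝ) (F : (Fin m → ℝ) → ℝ) (A : Matrix (Fin m) (Fin m) ℝ)
    (T : Set (ℤ × (Fin m → ℤ))) : ℝ≥0∞ :=
  ⨆ Q ∈ T, Mal α F (A.mulVec '' dC Q)

/-- A convex tree of dyadic cubes with top cube `Qt`. -/
def ConvexTree {m : ℕ} (T : Set (ℤ × (Fin m → ℤ))) (Qt : ℤ × (Fin m → ℤ)) : Prop :=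
  Qt ∈ T ∧ (∀ Q ∈ T, dC Q ⊆ dC Qt) ∧
  ∀ Q ∈ T, ∀ Q' : ℤ × (Fin m → ℤ), dC Q ⊆ dC Q' → dC Q' ⊆ dC Qt → Q' ∈ T

/-- The Gaussian `g(x) = e^{−π|x|²}` on `ℝ^{2m}`. -/
def gss {m : ℕ} (x : Idx m → ℝ) : ℝ := Real.exp (-Real.pi * ∑ k, (x k) ^ 2)

/-- The mixed partial derivative `∂^0_i ∂^1_i g`. -/
def ddg {m : ℕ} (i : Fin m) (x : Idx m → ℝ) : ℝ :=
  fderiv ℝ (fun y : Idx m → ℝ => fderiv ℝ gss y (Pi.single (Sum.inl i) (1:ℝ))) x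
    (Pi.single (Sum.inr i) (1:ℝ))

/-- Isotropic `L¹` dilation on `ℝ^{2m}`: `φ_t(x) = t^{-2m} φ(t⁻¹ x)`. -/
def dil {m : ℕ} (t : ℝ) (φ : (Idx m → ℝ) → ℝ) (x : Idx m → ℝ) : ℝ :=
  (t ^ (2*m))⁻¹ * φ (t⁻¹ • x)

/-- Matrix dilation: `φ_D(x) = (det D)⁻¹ φ(D⁻¹ x)`. -/
def dilM {m : ℕ} (D : Matrix (Idx m) (Idx m) ℝ) (φ : (Idx m → ℝ) → ℝ) (x : Idx m → ℝ) : ℝ :=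
  (D.det)⁻¹ * φ (D⁻¹.mulVec x)

/-- The region `Ω_𝒯 = ∪_{Q∈𝒯} Q × (ℓ(Q)/2, ℓ(Q))` in the upper half space. -/
def Omega {m : ℕ} (T : Set (ℤ × (Fin m → ℤ))) : Set ((Fin m → ℝ) × ℝ) :=
  ⋃ Q ∈ T, (dC Q) ×ˢ Set.Ioo ((2:ℝ)^Q.1 / 2) ((2:ℝ)^Q.1)

/-- The localized form `Λ_𝒯((F_j)_j)`. -/
def LambdaT {m : ℕ} (J : Matrix (Idx m) (Fin m) ℝ) (T : Set (ℤ × (Fin m → ℤ)))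
    (c : ℝ → ℂ) (u : Idx m → ℝ) (i : Fin m) (F : Corner m → (Fin m → ℝ) → ℝ) : ℂ :=
  ∫ z in Omega T, c z.2 * Complex.ofReal ((1 + en u ^ (4*m))⁻¹ * (z.2)⁻¹ *
    ∫ x : Idx m → ℝ, (∏ j, F j (proj j x)) * dil z.2 (ddg i) (x - J.mulVec z.1 + z.2 • u))

/-- `T_k := ∪ {Q ∈ 𝒯 : ℓ(Q) = 2^k}`. -/
def Tkset {m : ℕ} (T : Set (ℤ × (Fin m → ℤ))) (k : ℤ) : Set (Fin m → ℝ) :=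
  ⋃ Q ∈ {q ∈ T | q.1 = k}, dC Q

/-- The form `Λ̃_𝒯((F_j)_j)` with localization in the `x` variables. -/
def LambdaTilde {m : ℕ} (J : Matrix (Idx m) (Fin m) ℝ) (T : Set (ℤ × (Fin m → ℤ)))
    (c : ℝ → ℂ) (u : Idx m → ℝ) (i : Fin m) (F : Corner m → (Fin m → ℝ) → ℝ) : ℂ :=
  ∑' k : ℤ, ∫ t in Set.Ioc ((2:ℝ)^(k-1)) ((2:ℝ)^k),
    c t * Complex.ofReal ((1 + en u ^ (4*m))⁻¹ * t⁻¹ *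
      ∫ p : Fin m → ℝ, ∫ x : Idx m → ℝ,
        (∏ j, Set.indicator ((Amat J j).mulVec '' Tkset T k) (F j) (proj j x)) *
          dil t (ddg i) (x - J.mulVec p + t • u))

/-- The form `Λ(𝒯,J,K)((F_j)_j)` from the induction proposition. -/
def LambdaK {m : ℕ} (J : Matrix (Idx m) (Fin m) ℝ) (T : Set (ℤ × (Fin m → ℤ)))
    (K : ℝ → (Idx m → ℝ) → ℂ) (F : Corner m → (Fin m → ℝ) → ℝ) : ℂ :=
  ∑' k : ℤ, ∫ x : Idx m → ℝ,
    Complex.ofReal (∏ j, Set.indicator ((Amat J j).mulVec '' Tkset T k) (F j) (proj j x)) *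
      ∫ t in Set.Ioc ((2:ℝ)^(k-1)) ((2:ℝ)^k), K t x * (t : ℂ)⁻¹

/-- The reflected corner `i∗j`, differing from `j` exactly at position `i`. -/
def istar {m : ℕ} (i : Fin m) (j : Corner m) : Corner m :=
  fun k => if k = i then 1 - j i else j k

/-- The diagonal matrix `Θ̃` with entry 0 at positions `i ≤ l` and 1 at positions `i > l`
(1-based), i.e. 0 for `i < l` and 1 otherwise in 0-based indexing. -/
def Th {m : ℕ} (l : ℕ) : Matrix (Fin m) (Fin m) ℝ :=
  Matrix.diagonal fun i => if (i : ℕ) < l then 0 else 1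

/-- The block diagonal matrix `Θ = diag(Θ̃, Θ̃)`. -/
def ThB {m : ℕ} (l : ℕ) : Matrix (Idx m) (Idx m) ℝ :=
  Matrix.diagonal (Sum.elim (fun i : Fin m => if (i:ℕ) < l then (0:ℝ) else 1)
    (fun i : Fin m => if (i:ℕ) < l then (0:ℝ) else 1))

end SBL

namespace SBL

/-!
Let `j₀` be the corner with `F_{j₀} ∘ A_{j₀}` vanishing on `Q_𝒯*`, and let `ℓ` be the side length
of `Q_𝒯`. For `p ∈ Q_𝒯`, regularity of the `A_j` forces `|x - J p| ≳ ℓ` wherever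
`∏_j F_j(Π_j x) ≠ 0`. On the ball of radius `≈ 2^n ℓ` around `J p`, each `Π_j x` lies in `A_j Q*`
with `Q` the `n`-th dyadic ancestor of `Q_𝒯`. Since every coordinate of `ℝ^{2m}` is seen by
exactly `2^{m-1}` of the projections `Π_j`, Finner's inequality bounds the integral of
`∏_j |F_j(Π_j x)|` over this ball by `(2^n ℓ)^{2m}` times the product of the averages
`[F_j ∘ A_j]_{Q*}`. The decay `t^{-2m} (t / (2^n ℓ))^{4m} (1 + |u|^{4m})` of the kernel on the
`n`-th shell makes the sum over `n` geometric. What remains is `(t / ℓ)^{2m}`, which is integrable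
against `dt / t` on `(0, ℓ]`.
-/

section Finner

variable {ι κ : Type*} [DecidableEq ι] [Fintype κ]

lemma lintegral_prod_rpow_update_le {X : ι → Type*} [∀ i, MeasurableSpace (X i)]
    {μ : ∀ i, Measure (X i)} {S : κ → Finset ι} {p : κ → ℝ} (hp : ∀ j, 0 ≤ p j) {k : ι}
    (hsum : ∑ j with k ∈ S j, p j = 1) {f : κ → (∀ i, X i) → ℝ≥0∞} (hf : ∀ j, Measurable (f j))
    (hupdate : ∀ j, k ∉ S j → ∀ x y, f j (Function.update x k y) = f j x) (x : ∀ i, X i) :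
    ∫⁻ y, ∏ j, f j (Function.update x k y) ^ p j ∂μ k ≤
      ∏ j, (∫⋯∫⁻_{k} ∩ S j, f j ∂μ) x ^ p j := by
  have hmeas (j : κ) : Measurable fun y => f j (Function.update x k y) :=
    (hf j).comp (measurable_update x)
  calc ∫⁻ y, ∏ j, f j (Function.update x k y) ^ p j ∂μ k
      = ∫⁻ y, (∏ j with k ∈ S j, f j (Function.update x k y) ^ p j) *
          ∏ j with k ∉ S j, f j x ^ p j ∂μ k := by
        refine lintegral_congr fun y => ?_
        rw [← Finset.prod_filter_mul_prod_filter_not Finset.univ (fun j => k ∈ S j)]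
        congr 1
        exact Finset.prod_congr rfl fun j hj => by rw [hupdate j (Finset.mem_filter.1 hj).2]
    _ = (∫⁻ y, ∏ j with k ∈ S j, f j (Function.update x k y) ^ p j ∂μ k) *
          ∏ j with k ∉ S j, f j x ^ p j :=
        lintegral_mul_const _ (Finset.measurable_prod _ fun j _ => (hmeas j).pow_const _)
    _ ≤ (∏ j with k ∈ S j, (∫⁻ y, f j (Function.update x k y) ∂μ k) ^ p j) *
          ∏ j with k ∉ S j, f j x ^ p j := by
        gcongr
        exact ENNReal.lintegral_prod_norm_pow_le _ (fun j _ => (hmeas j).aemeasurable) hsum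
          fun j _ => hp j
    _ = ∏ j, (∫⋯∫⁻_{k} ∩ S j, f j ∂μ) x ^ p j := by
        rw [← Finset.prod_filter_mul_prod_filter_not Finset.univ (fun j => k ∈ S j)
          fun j => (∫⋯∫⁻_{k} ∩ S j, f j ∂μ) x ^ p j]
        congr 1 <;> refine Finset.prod_congr rfl fun j hj => ?_
        · rw [Finset.singleton_inter_of_mem (Finset.mem_filter.1 hj).2, lmarginal_singleton]
        · rw [Finset.singleton_inter_of_notMem (Finset.mem_filter.1 hj).2, lmarginal_empty]

/-- Finner's inequality, by induction on the set of variables integrated out: for each new variable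
`k`, Hölder applies to the factors that depend on `k`, whose exponents sum to `1`. -/
theorem lmarginal_prod_rpow_le {X : ι → Type*} [∀ i, MeasurableSpace (X i)]
    {μ : ∀ i, Measure (X i)} [∀ i, SigmaFinite (μ i)] {S : κ → Finset ι} {p : κ → ℝ}
    (hp : ∀ j, 0 ≤ p j) (hsum : ∀ i, ∑ j with i ∈ S j, p j = 1) {f : κ → (∀ i, X i) → ℝ≥0∞}
    (hf : ∀ j, Measurable (f j)) (hdep : ∀ j, DependsOn (f j) (S j)) (s : Finset ι)
    (x : ∀ i, X i) :
    (∫⋯∫⁻_s, (fun y => ∏ j, f j y ^ p j) ∂μ) x ≤ ∏ j, (∫⋯∫⁻_s ∩ S j, f j ∂μ) x ^ p j := by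
  have hupdate (j : κ) (k : ι) (hk : k ∉ S j) (z : ∀ i, X i) (y : X k) :
      f j (Function.update z k y) = f j z :=
    hdep j fun i hi => Function.update_of_ne (ne_of_mem_of_not_mem hi hk) _ _
  have hmeas : Measurable fun y => ∏ j, f j y ^ p j :=
    Finset.measurable_prod _ fun j _ => (hf j).pow_const _
  induction s using Finset.induction generalizing x with
  | empty => simp only [Finset.empty_inter, lmarginal_empty, le_refl]
  | insert k s hk ih =>
    calc (∫⋯∫⁻_insert k s, (fun y => ∏ j, f j y ^ p j) ∂μ) x
        ≤ ∫⁻ y, ∏ j, (∫⋯∫⁻_s ∩ S j, f j ∂μ) (Function.update x k y) ^ p j ∂μ k := by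
          rw [lmarginal_insert _ hmeas hk]
          exact lintegral_mono fun y => ih _
      _ ≤ ∏ j, (∫⋯∫⁻_{k} ∩ S j, ∫⋯∫⁻_s ∩ S j, f j ∂μ ∂μ) x ^ p j := by
          refine lintegral_prod_rpow_update_le hp (hsum k) (fun j => (hf j).lmarginal μ)
            (fun j hkj z y => ?_) x
          rw [lmarginal_update_of_notMem (hf j) (fun h => hk (Finset.mem_inter.1 h).1)]
          exact congrArg (fun g => (∫⋯∫⁻_s ∩ S j, g ∂μ) z) (funext fun w => hupdate j k hkj w y)
      _ = ∏ j, (∫⋯∫⁻_insert k s ∩ S j, f j ∂μ) x ^ p j := by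
          refine Finset.prod_congr rfl fun j _ => ?_
          have hdisj : Disjoint ({k} ∩ S j) (s ∩ S j) :=
            (Finset.disjoint_singleton_left.2 hk).mono Finset.inter_subset_left
              Finset.inter_subset_left
          rw [← lmarginal_union μ (f j) (hf j) hdisj, ← Finset.union_inter_distrib_right,
            Finset.insert_eq]

theorem lintegral_prod_comp_le [Fintype ι] {ι' α : Type*} [Fintype ι'] [MeasureSpace α]
    [SigmaFinite (volume : Measure α)] {σ : κ → ι' → ι} (hσ : ∀ j, Function.Injective (σ j))
    {N : ℕ} (hN : N ≠ 0) (hcard : ∀ i, Finset.card {j | ∃ a, σ j a = i} = N)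
    {G : κ → (ι' → α) → ℝ≥0∞} (hG : ∀ j, Measurable (G j)) :
    ∫⁻ x : ι → α, ∏ j, G j (x ∘ σ j) ≤ ∏ j, (∫⁻ z, G j z ^ N) ^ (N : ℝ)⁻¹ := by
  classical
  rcases isEmpty_or_nonempty (ι → α) with _ | ⟨⟨x₀⟩⟩
  · simp only [lintegral_of_isEmpty, zero_le]
  have hN' : (N : ℝ) ≠ 0 := Nat.cast_ne_zero.2 hN
  have hdep (j : κ) : DependsOn (fun x : ι → α => G j (x ∘ σ j) ^ N)
      (Finset.univ.image (σ j) : Finset ι) := fun x y hxy => by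
    have hcomp : x ∘ σ j = y ∘ σ j :=
      funext fun a => hxy _ (Finset.mem_coe.2 (Finset.mem_image_of_mem _ (Finset.mem_univ a)))
    simp only [hcomp]
  have hmeas (j : κ) : Measurable fun x : ι → α => G j (x ∘ σ j) ^ N :=
    ((hG j).comp (measurable_pi_iff.2 fun a => measurable_pi_apply _)).pow_const _
  have hweight (i : ι) : ∑ j with i ∈ Finset.univ.image (σ j), (N : ℝ)⁻¹ = 1 := by
    simp only [Finset.mem_image, Finset.mem_univ, true_and, Finset.sum_const, hcard i,
      nsmul_eq_mul, mul_inv_cancel₀ hN']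
  calc ∫⁻ x : ι → α, ∏ j, G j (x ∘ σ j)
      = ∫⁻ x : ι → α, ∏ j, (G j (x ∘ σ j) ^ N) ^ (N : ℝ)⁻¹ := by
        simp only [← ENNReal.rpow_natCast_mul, mul_inv_cancel₀ hN', ENNReal.rpow_one]
    _ ≤ ∏ j, (∫⋯∫⁻_Finset.univ.image (σ j), (fun x => G j (x ∘ σ j) ^ N)
          ∂fun _ : ι => (volume : Measure α)) x₀ ^ (N : ℝ)⁻¹ := by
        simpa only [lmarginal_univ, Finset.univ_inter] using!
          lmarginal_prod_rpow_le (μ := fun _ : ι => (volume : Measure α)) (fun _ => by positivity)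
            hweight hmeas hdep Finset.univ x₀
    _ = ∏ j, (∫⁻ z, G j z ^ N) ^ (N : ℝ)⁻¹ := by
        refine Finset.prod_congr rfl fun j _ => congrArg (· ^ (N : ℝ)⁻¹) ?_
        exact (lmarginal_image (μ := fun _ : ι => (volume : Measure α)) (hσ j) Finset.univ
          ((hG j).pow_const N) x₀).trans (by rw [lmarginal_univ]; rfl)

end Finner

section DyadicShells

lemma pow_two_succ_pow_mul_div_le {q p : ℕ} (hqp : q < p) {ρ B : ℝ} (hρ : 0 < ρ) (hB : 0 ≤ B)
    (n : ℕ) :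
    ((2 : ℝ) ^ (n + 1)) ^ q * (B / (2 ^ n * ρ) ^ p) ≤
      2 ^ (q + 1) * B / ρ ^ p / 2 / 2 ^ n := by
  have hpow : ((2 : ℝ) ^ n) ^ (q + 1) ≤ (2 ^ n) ^ p :=
    pow_le_pow_right₀ (one_le_pow₀ one_le_two) hqp
  calc ((2 : ℝ) ^ (n + 1)) ^ q * (B / (2 ^ n * ρ) ^ p)
      = 2 ^ q * B / ρ ^ p * ((2 ^ n) ^ q / (2 ^ n) ^ p) := by
        rw [pow_succ, mul_pow, mul_pow]; ring
    _ ≤ 2 ^ q * B / ρ ^ p * ((2 ^ n) ^ q / (2 ^ n) ^ (q + 1)) := by gcongr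
    _ = 2 ^ (q + 1) * B / ρ ^ p / 2 / 2 ^ n := by
        rw [pow_succ (2 : ℝ) q, pow_succ ((2 : ℝ) ^ n) q]; field_simp

variable {X E : Type*} [PseudoMetricSpace X] [NormedAddCommGroup E] {x₀ : X} {p : ℕ} {k : X → E}
  {B : ℝ}

lemma enorm_le_ofReal_div_of_norm_mul_pow_le (hk : ∀ x, ‖k x‖ * dist x x₀ ^ p ≤ B) {r : ℝ}
    (hr : 0 < r) {x : X} (hx : r ≤ dist x x₀) : ‖k x‖ₑ ≤ ENNReal.ofReal (B / r ^ p) := by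
  rw [← ofReal_norm]
  refine ENNReal.ofReal_le_ofReal ((le_div_iff₀ (by positivity)).2 (le_trans ?_ (hk x)))
  gcongr

variable [MeasurableSpace X] [OpensMeasurableSpace X] {μ : Measure X} {f : X → ℝ≥0∞} {A : ℝ≥0∞}

lemma setLIntegral_shell_mul_enorm_le {r R : ℝ} (hr : 0 < r) (hf : Measurable f)
    (hball : ∫⁻ x in Metric.closedBall x₀ R, f x ∂μ ≤ A)
    (hk : ∀ x, ‖k x‖ * dist x x₀ ^ p ≤ B) :
    ∫⁻ x in {x | r ≤ dist x x₀ ∧ dist x x₀ ≤ R}, f x * ‖k x‖ₑ ∂μ ≤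
      A * ENNReal.ofReal (B / r ^ p) := by
  have hdist : Measurable fun x => dist x x₀ := (continuous_id.dist continuous_const).measurable
  have hmeas : MeasurableSet {x | r ≤ dist x x₀ ∧ dist x x₀ ≤ R} :=
    (measurableSet_le measurable_const hdist).inter (measurableSet_le hdist measurable_const)
  calc ∫⁻ x in {x | r ≤ dist x x₀ ∧ dist x x₀ ≤ R}, f x * ‖k x‖ₑ ∂μ
      ≤ ∫⁻ x in {x | r ≤ dist x x₀ ∧ dist x x₀ ≤ R}, f x * ENNReal.ofReal (B / r ^ p) ∂μ :=
        setLIntegral_mono' hmeas fun x hx => by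
          gcongr; exact enorm_le_ofReal_div_of_norm_mul_pow_le hk hr hx.1
    _ ≤ A * ENNReal.ofReal (B / r ^ p) := by
        rw [lintegral_mul_const _ hf]
        gcongr
        exact (lintegral_mono_set fun x hx => hx.2).trans hball

theorem lintegral_mul_enorm_le_of_lintegral_closedBall_le {ρ : ℝ} (hρ : 0 < ρ) (hf : Measurable f)
    (hsupp : ∀ x, f x ≠ 0 → ρ ≤ dist x x₀) {q : ℕ} (hqp : q < p)
    (hball : ∀ n : ℕ, ∫⁻ x in Metric.closedBall x₀ (2 ^ n * ρ), f x ∂μ ≤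
      A * ENNReal.ofReal ((2 ^ n) ^ q))
    (hB : 0 ≤ B) (hk : ∀ x, ‖k x‖ * dist x x₀ ^ p ≤ B) :
    ∫⁻ x, f x * ‖k x‖ₑ ∂μ ≤ A * ENNReal.ofReal (2 ^ (q + 1) * B / ρ ^ p) := by
  set shell : ℕ → Set X := fun n => {x | 2 ^ n * ρ ≤ dist x x₀ ∧ dist x x₀ ≤ 2 ^ (n + 1) * ρ}
  have hcover : (Function.support fun x => f x * ‖k x‖ₑ) ⊆ ⋃ n, shell n := fun x hx => by
    obtain ⟨n, hn, hn'⟩ := exists_nat_pow_near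
      ((one_le_div hρ).2 (hsupp x (left_ne_zero_of_mul hx))) one_lt_two
    exact Set.mem_iUnion.2 ⟨n, (le_div_iff₀ hρ).1 hn, ((div_lt_iff₀ hρ).1 hn').le⟩
  have hshell (n : ℕ) : ∫⁻ x in shell n, f x * ‖k x‖ₑ ∂μ ≤
      A * ENNReal.ofReal (2 ^ (q + 1) * B / ρ ^ p / 2 / 2 ^ n) := by
    refine (setLIntegral_shell_mul_enorm_le (by positivity) hf (hball (n + 1)) hk).trans ?_
    rw [mul_assoc, ← ENNReal.ofReal_mul (by positivity)]
    gcongr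
    exact pow_two_succ_pow_mul_div_le hqp hρ hB n
  calc ∫⁻ x, f x * ‖k x‖ₑ ∂μ
      = ∫⁻ x in ⋃ n, shell n, f x * ‖k x‖ₑ ∂μ := (setLIntegral_eq_of_support_subset hcover).symm
    _ ≤ ∑' n, A * ENNReal.ofReal (2 ^ (q + 1) * B / ρ ^ p / 2 / 2 ^ n) :=
        (lintegral_iUnion_le _ _).trans (ENNReal.tsum_le_tsum hshell)
    _ = A * ENNReal.ofReal (2 ^ (q + 1) * B / ρ ^ p) := by
        rw [ENNReal.tsum_mul_left, ← ENNReal.ofReal_tsum_of_nonneg (fun n => by positivity)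
          (summable_geometric_two' _), tsum_geometric_two']

end DyadicShells

section Corners

variable {m : ℕ}

lemma sel_injective (j : Corner m) : Function.Injective (sel j) := fun a b h => by
  unfold sel at h
  split_ifs at h
  exacts [Sum.inl_injective h, Sum.inr_injective h]

lemma exists_sel_eq_inl_iff {j : Corner m} {i : Fin m} :
    (∃ a, sel j a = Sum.inl i) ↔ j i = 0 := by
  simp only [sel, ite_eq_iff, Sum.inl.injEq, reduceCtorEq, and_false, or_false,
    exists_eq_right]

lemma exists_sel_eq_inr_iff {j : Corner m} {i : Fin m} :
    (∃ a, sel j a = Sum.inr i) ↔ j i = 1 := by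
  simp only [sel, ite_eq_iff, Sum.inr.injEq, reduceCtorEq, and_false, false_or,
    exists_eq_right]
  lia

lemma card_corner_apply_eq (i : Fin m) (b : Fin 2) :
    Finset.card {j : Corner m | j i = b} = 2 ^ (m - 1) := by
  have h := Fintype.card_filter_piFinset_const_eq_of_mem (Finset.univ : Finset (Fin 2)) i
    (Finset.mem_univ b)
  simpa only [Fintype.piFinset_univ, Finset.card_univ, Fintype.card_fin] using h

lemma card_corner_exists_sel_eq (k : Idx m) :
    Finset.card {j : Corner m | ∃ i, sel j i = k} = 2 ^ (m - 1) := by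
  rcases k with i | i
  · simp only [exists_sel_eq_inl_iff, card_corner_apply_eq]
  · simp only [exists_sel_eq_inr_iff, card_corner_apply_eq]

lemma measurable_proj (j : Corner m) : Measurable (proj j) :=
  measurable_pi_iff.2 fun _ => measurable_pi_apply _

lemma norm_proj_le (j : Corner m) (x : Idx m → ℝ) : ‖proj j x‖ ≤ ‖x‖ :=
  (pi_norm_le_iff_of_nonneg (norm_nonneg _)).2 fun i => norm_le_pi_norm x (sel j i)

lemma proj_sub_mulVec (J : Matrix (Idx m) (Fin m) ℝ) (j : Corner m) (x : Idx m → ℝ)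
    (p : Fin m → ℝ) : proj j (x - J *ᵥ p) = proj j x - Amat J j *ᵥ p :=
  rfl

theorem lintegral_prod_proj_le {G : Corner m → (Fin m → ℝ) → ℝ≥0∞}
    (hG : ∀ j, Measurable (G j)) :
    ∫⁻ x : Idx m → ℝ, ∏ j, G j (proj j x) ≤
      ∏ j, (∫⁻ z, G j z ^ 2 ^ (m - 1)) ^ ((2 ^ (m - 1) : ℕ) : ℝ)⁻¹ :=
  lintegral_prod_comp_le sel_injective (by positivity)
    (fun k => by convert card_corner_exists_sel_eq k) hG

lemma setLIntegral_prod_proj_le {B : Corner m → Set (Fin m → ℝ)} (hB : ∀ j, MeasurableSet (B j))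
    {E : Set (Idx m → ℝ)} (hE : ∀ x ∈ E, ∀ j, proj j x ∈ B j)
    {G : Corner m → (Fin m → ℝ) → ℝ≥0∞} (hG : ∀ j, Measurable (G j)) :
    ∫⁻ x in E, ∏ j, G j (proj j x) ≤
      ∏ j, (∫⁻ z in B j, G j z ^ 2 ^ (m - 1)) ^ ((2 ^ (m - 1) : ℕ) : ℝ)⁻¹ := by
  have hmeas : MeasurableSet {x : Idx m → ℝ | ∀ j, proj j x ∈ B j} := by
    rw [Set.ofPred_forall]
    exact MeasurableSet.iInter fun j => measurable_proj j (hB j)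
  have hpow (j : Corner m) (z : Fin m → ℝ) : (B j).indicator (G j) z ^ 2 ^ (m - 1) =
      (B j).indicator (fun z => G j z ^ 2 ^ (m - 1)) z := by
    by_cases hz : z ∈ B j <;> simp [hz]
  calc ∫⁻ x in E, ∏ j, G j (proj j x)
      ≤ ∫⁻ x in {x | ∀ j, proj j x ∈ B j}, ∏ j, G j (proj j x) := lintegral_mono_set hE
    _ ≤ ∫⁻ x, ∏ j, (B j).indicator (G j) (proj j x) := by
        refine (setLIntegral_mono' hmeas fun x hx => ?_).trans (setLIntegral_le_lintegral _ _)
        exact Finset.prod_le_prod' fun j _ => (Set.indicator_of_mem (hx j) _).ge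
    _ ≤ ∏ j, (∫⁻ z, (B j).indicator (G j) z ^ 2 ^ (m - 1)) ^ ((2 ^ (m - 1) : ℕ) : ℝ)⁻¹ :=
        lintegral_prod_proj_le fun j => (hG j).indicator (hB j)
    _ = ∏ j, (∫⁻ z in B j, G j z ^ 2 ^ (m - 1)) ^ ((2 ^ (m - 1) : ℕ) : ℝ)⁻¹ := by
        simp only [hpow, lintegral_indicator (hB _)]

lemma inv_pow_mul_card_corner (hm : m ≠ 0) :
    ((2 ^ (m - 1) : ℕ) : ℝ)⁻¹ * Fintype.card (Corner m) = (2 : ℕ) := by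
  rw [Fintype.card_fun, Fintype.card_fin, Fintype.card_fin, ← pow_sub_one_mul hm 2,
    Nat.cast_mul, inv_mul_cancel_left₀ (by positivity)]

end Corners

section RegularMatrices

lemma abs_apply_le_opNorm {ι κ : Type*} [Fintype ι] [Fintype κ] [DecidableEq κ]
    (A : Matrix ι κ ℝ) (i : ι) (k : κ) : |A i k| ≤ opNorm A :=
  calc |A i k| = ‖Matrix.toEuclideanLin A (EuclideanSpace.single k 1) i‖ := by
        simp [Matrix.toLpLin_apply]
    _ ≤ ‖Matrix.toEuclideanLin A (EuclideanSpace.single k 1)‖ := PiLp.norm_apply_le _ _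
    _ ≤ opNorm A * ‖EuclideanSpace.single k (1 : ℝ)‖ :=
        (LinearMap.toContinuousLinearMap (Matrix.toEuclideanLin A)).le_opNorm _
    _ = opNorm A := by rw [PiLp.norm_single, norm_one, mul_one]

variable {n : Type*} [Fintype n]

lemma norm_mulVec_le {M : Matrix n n ℝ} {b : ℝ} (hb : 0 ≤ b) (hM : ∀ i k, |M i k| ≤ b)
    (v : n → ℝ) : ‖M *ᵥ v‖ ≤ Fintype.card n * b * ‖v‖ := by
  refine (pi_norm_le_iff_of_nonneg (by positivity)).2 fun i => ?_
  calc ‖∑ k, M i k * v k‖ ≤ ∑ k, ‖M i k * v k‖ := norm_sum_le _ _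
    _ ≤ ∑ _k : n, b * ‖v‖ := by
        refine Finset.sum_le_sum fun k _ => ?_
        rw [norm_mul]
        exact mul_le_mul (hM i k) (norm_le_pi_norm v k) (norm_nonneg _) hb
    _ = Fintype.card n * b * ‖v‖ := by
        rw [Finset.sum_const, Finset.card_univ, nsmul_eq_mul, mul_assoc]

variable [DecidableEq n]

lemma abs_det_le {A : Matrix n n ℝ} {B : ℝ} (hA : ∀ i k, |A i k| ≤ B) :
    |A.det| ≤ (Fintype.card n).factorial * B ^ Fintype.card n := by
  rw [← nsmul_eq_mul]
  exact Matrix.det_le (abv := AbsoluteValue.abs) hA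

lemma abs_adjugate_apply_le {A : Matrix n n ℝ} {B : ℝ} (hB : 1 ≤ B) (hA : ∀ i k, |A i k| ≤ B)
    (i k : n) : |A.adjugate i k| ≤ (Fintype.card n).factorial * B ^ Fintype.card n := by
  rw [Matrix.adjugate_apply]
  refine abs_det_le fun a b => ?_
  rw [Matrix.updateRow_apply]
  split_ifs
  · rw [Pi.single_apply]
    split_ifs
    · rwa [abs_one]
    · rw [abs_zero]; positivity
  · exact hA a b

lemma abs_det_mul_norm_le {A : Matrix n n ℝ} {B : ℝ} (hB : 1 ≤ B) (hA : ∀ i k, |A i k| ≤ B)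
    (v : n → ℝ) :
    |A.det| * ‖v‖ ≤ Fintype.card n * ((Fintype.card n).factorial * B ^ Fintype.card n) *
      ‖A *ᵥ v‖ := by
  have hadj : A.det • v = A.adjugate *ᵥ (A *ᵥ v) := by
    rw [Matrix.mulVec_mulVec, Matrix.adjugate_mul, Matrix.smul_mulVec, Matrix.one_mulVec]
  rw [← Real.norm_eq_abs, ← norm_smul, hadj]
  exact norm_mulVec_le (by positivity) (abs_adjugate_apply_le hB hA) _

lemma IsReg.abs_det_le {m : ℕ} {Δ : ℝ} {A : Matrix (Fin m) (Fin m) ℝ} (hA : IsReg Δ A) :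
    |A.det| ≤ m.factorial * Δ ^ m := by
  simpa only [Fintype.card_fin] using
    SBL.abs_det_le fun i k => (abs_apply_le_opNorm A i k).trans hA.1

lemma exists_norm_le_mul_norm_mulVec_of_isReg (m : ℕ) (Δ : ℝ) :
    ∃ K > 0, ∀ A : Matrix (Fin m) (Fin m) ℝ, IsReg Δ A → ∀ v, ‖v‖ ≤ K * ‖A *ᵥ v‖ := by
  set B := max 1 Δ
  have hB : 1 ≤ B := le_max_left _ _
  set b : ℝ := m * (m.factorial * B ^ m)
  refine ⟨B * b + 1, by positivity, fun A hA v => ?_⟩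
  obtain ⟨hop, hdet, hinv⟩ := hA
  have hentry (i k : Fin m) : |A i k| ≤ B :=
    ((abs_apply_le_opNorm A i k).trans hop).trans (le_max_right _ _)
  calc ‖v‖ = |A.det|⁻¹ * (|A.det| * ‖v‖) := (inv_mul_cancel_left₀ (abs_ne_zero.2 hdet) _).symm
    _ ≤ B * (b * ‖A *ᵥ v‖) := by
        have hdet_mul : |A.det| * ‖v‖ ≤ b * ‖A *ᵥ v‖ := by
          simpa only [Fintype.card_fin] using abs_det_mul_norm_le hB hentry v
        gcongr ?_ * ?_
        exact hinv.trans (le_max_right _ _)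
    _ ≤ (B * b + 1) * ‖A *ᵥ v‖ := by linarith [norm_nonneg (A *ᵥ v)]

end RegularMatrices

section DyadicCubes

variable {m : ℕ}

lemma dC_eq_pi (Q : ℤ × (Fin m → ℤ)) :
    dC Q = Set.univ.pi fun i => Set.Ico ((2 : ℝ) ^ Q.1 * Q.2 i) (2 ^ Q.1 * (Q.2 i + 1)) := by
  ext x
  simp only [dC, Set.mem_ofPred_eq, Set.mem_univ_pi, Set.mem_Ico]

lemma dCstar_eq_pi (Q : ℤ × (Fin m → ℤ)) :
    dCstar Q =
      Set.univ.pi fun i => Set.Ico ((2 : ℝ) ^ Q.1 * (Q.2 i - 1)) (2 ^ Q.1 * (Q.2 i + 2)) := by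
  ext x
  simp only [dCstar, Set.mem_ofPred_eq, Set.mem_univ_pi, Set.mem_Ico]

lemma measurableSet_dC (Q : ℤ × (Fin m → ℤ)) : MeasurableSet (dC Q) := by
  rw [dC_eq_pi]
  exact MeasurableSet.univ_pi fun i => measurableSet_Ico

lemma measurableSet_dCstar (Q : ℤ × (Fin m → ℤ)) : MeasurableSet (dCstar Q) := by
  rw [dCstar_eq_pi]
  exact MeasurableSet.univ_pi fun i => measurableSet_Ico

lemma volume_dC (Q : ℤ × (Fin m → ℤ)) :
    volume (dC Q) = ENNReal.ofReal ((2 : ℝ) ^ Q.1) ^ m := by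
  have hside (i : Fin m) : (2 : ℝ) ^ Q.1 * (Q.2 i + 1) - 2 ^ Q.1 * Q.2 i = 2 ^ Q.1 := by ring
  simp only [dC_eq_pi, volume_pi_pi, Real.volume_Ico, hside, Finset.prod_const,
    Finset.card_univ, Fintype.card_fin]

lemma volume_dCstar (Q : ℤ × (Fin m → ℤ)) :
    volume (dCstar Q) = ENNReal.ofReal (3 * (2 : ℝ) ^ Q.1) ^ m := by
  have hside (i : Fin m) :
      (2 : ℝ) ^ Q.1 * (Q.2 i + 2) - 2 ^ Q.1 * (Q.2 i - 1) = 3 * 2 ^ Q.1 := by ring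
  simp only [dCstar_eq_pi, volume_pi_pi, Real.volume_Ico, hside, Finset.prod_const,
    Finset.card_univ, Fintype.card_fin]

lemma volume_dCstar_ne_zero (Q : ℤ × (Fin m → ℤ)) : volume (dCstar Q) ≠ 0 := by
  rw [volume_dCstar]
  exact pow_ne_zero _ (ENNReal.ofReal_pos.2 (by positivity)).ne'

lemma isBounded_dCstar (Q : ℤ × (Fin m → ℤ)) : Bornology.IsBounded (dCstar Q) := by
  rw [dCstar_eq_pi]
  exact Bornology.IsBounded.pi fun i => Metric.isBounded_Ico _ _

lemma side_le_of_dC_subset (hm : m ≠ 0) {Q Q' : ℤ × (Fin m → ℤ)} (h : dC Q ⊆ dC Q') :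
    (2 : ℝ) ^ Q.1 ≤ 2 ^ Q'.1 := by
  have hvol := measure_mono (μ := volume) h
  rw [volume_dC, volume_dC, ENNReal.pow_le_pow_left_iff hm] at hvol
  exact (ENNReal.ofReal_le_ofReal_iff (by positivity)).1 hvol

/-- The dyadic cube of side length `2^N ℓ(Q)` that contains the dyadic cube `Q`; cubes are
encoded by their parameters as in `dC`. -/
def ancestor (Q : ℤ × (Fin m → ℤ)) (N : ℕ) : ℤ × (Fin m → ℤ) :=
  (Q.1 + N, fun i => Q.2 i / 2 ^ N)

@[simp]
lemma ancestor_zero (Q : ℤ × (Fin m → ℤ)) : ancestor Q 0 = Q := by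
  simp [ancestor]

lemma side_ancestor (Q : ℤ × (Fin m → ℤ)) (N : ℕ) :
    (2 : ℝ) ^ (ancestor Q N).1 = 2 ^ N * 2 ^ Q.1 := by
  rw [ancestor, zpow_add₀ two_ne_zero, zpow_natCast, mul_comm]

lemma ancestor_le (Q : ℤ × (Fin m → ℤ)) (N : ℕ) (i : Fin m) :
    (2 : ℝ) ^ N * (ancestor Q N).2 i ≤ Q.2 i := by
  have h : (2 : ℤ) ^ N * (Q.2 i / 2 ^ N) ≤ Q.2 i := Int.mul_ediv_self_le (by positivity)
  exact_mod_cast h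

lemma le_ancestor (Q : ℤ × (Fin m → ℤ)) (N : ℕ) (i : Fin m) :
    (Q.2 i + 1 : ℝ) ≤ 2 ^ N * ((ancestor Q N).2 i + 1) := by
  have h : Q.2 i < (2 : ℤ) ^ N * (Q.2 i / 2 ^ N) + 2 ^ N :=
    Int.lt_mul_ediv_self_add (by positivity)
  have h' : Q.2 i + 1 ≤ (2 : ℤ) ^ N * (Q.2 i / 2 ^ N + 1) := by linarith
  exact_mod_cast h'

lemma dCstar_subset_ancestor (Q : ℤ × (Fin m → ℤ)) (N : ℕ) :
    dCstar Q ⊆ dCstar (ancestor Q N) := fun x hx i => by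
  have hN : (1 : ℝ) ≤ 2 ^ N := one_le_pow₀ one_le_two
  rw [side_ancestor, mul_comm ((2 : ℝ) ^ N), mul_assoc, mul_assoc]
  constructor
  · refine le_trans ?_ (hx i).1
    gcongr
    linarith [ancestor_le Q N i]
  · refine (hx i).2.trans_le ?_
    gcongr
    linarith [le_ancestor Q N i]

lemma mem_dCstar_ancestor {Q : ℤ × (Fin m → ℤ)} {N : ℕ} {p y : Fin m → ℝ} (hp : p ∈ dC Q)
    (h : ‖y - p‖ ≤ 2 ^ N * 2 ^ Q.1) : y ∈ dCstar (ancestor Q N) := fun i => by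
  obtain ⟨hlower, hupper⟩ := hp i
  have hyp := abs_le.1 ((norm_le_pi_norm (y - p) i).trans h)
  rw [Pi.sub_apply] at hyp
  have hL : (0 : ℝ) ≤ 2 ^ Q.1 := by positivity
  have hlower' := mul_le_mul_of_nonneg_left (ancestor_le Q N i) hL
  have hupper' := mul_le_mul_of_nonneg_left (le_ancestor Q N i) hL
  rw [side_ancestor]
  constructor <;> linarith

lemma side_le_norm_sub {Q : ℤ × (Fin m → ℤ)} {p y : Fin m → ℝ} (hp : p ∈ dC Q)
    (hy : y ∉ dCstar Q) : (2 : ℝ) ^ Q.1 ≤ ‖y - p‖ := by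
  contrapose! hy
  simpa only [ancestor_zero] using mem_dCstar_ancestor (N := 0) hp (by linarith)

end DyadicCubes

section KernelDecay

lemma norm_comp_inv_smul_add_mul_pow_le {E F : Type*} [NormedAddCommGroup E] [NormedSpace ℝ E]
    [NormedAddCommGroup F] {φ : E → F} {N : ℕ} {C : ℝ} (hφ : ∀ x, ‖φ x‖ * (1 + ‖x‖) ^ N ≤ C)
    {t : ℝ} (ht : 0 < t) (w u : E) :
    ‖φ (t⁻¹ • (w + t • u))‖ * ‖w‖ ^ N ≤ C * (1 + ‖u‖) ^ N * t ^ N := by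
  set v := t⁻¹ • (w + t • u)
  have hwv : w = t • (v - u) := by
    rw [smul_sub, smul_inv_smul₀ ht.ne', add_sub_cancel_right]
  have hw : ‖w‖ ≤ t * ((1 + ‖v‖) * (1 + ‖u‖)) := by
    rw [hwv, norm_smul, Real.norm_of_nonneg ht.le]
    gcongr
    nlinarith [norm_sub_le v u, norm_nonneg v, norm_nonneg u]
  calc ‖φ v‖ * ‖w‖ ^ N ≤ ‖φ v‖ * (t * ((1 + ‖v‖) * (1 + ‖u‖))) ^ N := by gcongr
    _ = ‖φ v‖ * (1 + ‖v‖) ^ N * ((1 + ‖u‖) ^ N * t ^ N) := by rw [mul_pow, mul_pow]; ring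
    _ ≤ C * ((1 + ‖u‖) ^ N * t ^ N) := by gcongr; exact hφ v
    _ = C * (1 + ‖u‖) ^ N * t ^ N := by ring

lemma norm_le_en {ι : Type*} [Fintype ι] (u : ι → ℝ) : ‖u‖ ≤ en u :=
  (pi_norm_le_iff_of_nonneg (Real.sqrt_nonneg _)).2 fun k =>
    Real.abs_le_sqrt (Finset.single_le_sum (f := fun k => u k ^ 2) (fun _ _ => sq_nonneg _)
      (Finset.mem_univ k))

lemma norm_sq_le_sum_sq {ι : Type*} [Fintype ι] (x : ι → ℝ) : ‖x‖ ^ 2 ≤ ∑ k, x k ^ 2 := by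
  rw [← Real.sq_sqrt (Finset.sum_nonneg fun k _ => sq_nonneg (x k))]
  exact pow_le_pow_left₀ (norm_nonneg x) (norm_le_en x) 2

lemma one_add_norm_pow_le {ι : Type*} [Fintype ι] (u : ι → ℝ) (N : ℕ) :
    (1 + ‖u‖) ^ N ≤ 2 ^ N * (1 + en u ^ N) :=
  calc (1 + ‖u‖) ^ N ≤ 2 ^ (N - 1) * (1 ^ N + ‖u‖ ^ N) :=
        add_pow_le zero_le_one (norm_nonneg u) N
    _ ≤ 2 ^ N * (1 + en u ^ N) := by
        rw [one_pow]
        gcongr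
        · exact one_le_two
        · exact Nat.sub_le N 1
        · exact norm_le_en u

variable {m : ℕ}

lemma abs_dil_mul_norm_pow_le {φ : (Idx m → ℝ) → ℝ} {C : ℝ}
    (hφ : ∀ x, |φ x| * (1 + ‖x‖) ^ (4 * m) ≤ C) {t : ℝ} (ht : 0 < t) (w u : Idx m → ℝ) :
    |dil t φ (w + t • u)| * ‖w‖ ^ (4 * m) ≤
      2 ^ (4 * m) * C * (1 + en u ^ (4 * m)) * t ^ (2 * m) := by
  have hC : 0 ≤ C := le_trans (by positivity) (hφ 0)
  have ht4 : t ^ (4 * m) = t ^ (2 * m) * t ^ (2 * m) := by rw [← pow_add]; congr 1; ring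
  rw [dil, abs_mul, abs_of_pos (by positivity), mul_assoc, inv_mul_le_iff₀ (by positivity)]
  calc |φ (t⁻¹ • (w + t • u))| * ‖w‖ ^ (4 * m) ≤ C * (1 + ‖u‖) ^ (4 * m) * t ^ (4 * m) :=
        norm_comp_inv_smul_add_mul_pow_le (φ := φ) hφ ht w u
    _ ≤ C * (2 ^ (4 * m) * (1 + en u ^ (4 * m))) * t ^ (4 * m) := by
        gcongr
        exact one_add_norm_pow_le u _
    _ = t ^ (2 * m) * (2 ^ (4 * m) * C * (1 + en u ^ (4 * m)) * t ^ (2 * m)) := by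
        rw [ht4]; ring

lemma hasFDerivAt_gss (x : Idx m → ℝ) :
    HasFDerivAt (gss (m := m)) (gss x • ((-Real.pi) • ∑ k, (2 * x k) •
      (ContinuousLinearMap.proj k : (Idx m → ℝ) →L[ℝ] ℝ))) x := by
  have hsum : HasFDerivAt (fun y : Idx m → ℝ => ∑ k, y k ^ 2)
      (∑ k, (2 * x k) • (ContinuousLinearMap.proj k : (Idx m → ℝ) →L[ℝ] ℝ)) x := by
    refine HasFDerivAt.fun_sum fun k _ => ?_
    simpa using ((ContinuousLinearMap.proj k : (Idx m → ℝ) →L[ℝ] ℝ).hasFDerivAt (x := x)).pow 2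
  exact (hsum.const_mul (-Real.pi)).exp

lemma fderiv_gss_single (x : Idx m → ℝ) (k : Idx m) :
    fderiv ℝ gss x (Pi.single k (1 : ℝ)) = gss x * (-Real.pi * (2 * x k)) := by
  rw [(hasFDerivAt_gss x).fderiv]
  simp only [_root_.smul_apply, _root_.sum_apply, ContinuousLinearMap.proj_apply,
    Pi.single_apply, smul_eq_mul, mul_ite, mul_one, mul_zero, Finset.sum_ite_eq',
    Finset.mem_univ, if_true]

lemma ddg_eq (i : Fin m) (x : Idx m → ℝ) :
    ddg i x = 4 * Real.pi ^ 2 * (x (Sum.inl i) * x (Sum.inr i)) * gss x := by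
  have hlin : HasFDerivAt (fun y : Idx m → ℝ => -Real.pi * (2 * y (Sum.inl i)))
      ((-Real.pi) • (2 : ℝ) • (ContinuousLinearMap.proj (Sum.inl i) : (Idx m → ℝ) →L[ℝ] ℝ)) x :=
    (((ContinuousLinearMap.proj (Sum.inl i) : (Idx m → ℝ) →L[ℝ] ℝ).hasFDerivAt).const_mul
      (2 : ℝ)).const_mul _
  simp only [ddg, fderiv_gss_single]
  rw [((hasFDerivAt_gss x).fun_mul hlin).fderiv, ← (hasFDerivAt_gss x).fderiv]
  simp only [_root_.add_apply, _root_.smul_apply, fderiv_gss_single,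
    ContinuousLinearMap.proj_apply, Pi.single_apply, smul_eq_mul, reduceCtorEq, if_false]
  ring

lemma gss_le_exp (x : Idx m → ℝ) : gss x ≤ Real.exp (1 - ‖x‖) := by
  refine Real.exp_le_exp.2 ?_
  nlinarith [norm_sq_le_sum_sq x, sq_nonneg (‖x‖ - 1), sq_nonneg ‖x‖, Real.pi_gt_three]

lemma gss_mul_pow_le (x : Idx m → ℝ) (N : ℕ) :
    gss x * (1 + ‖x‖) ^ N ≤ N.factorial * Real.exp 2 :=
  calc gss x * (1 + ‖x‖) ^ N
      ≤ Real.exp (1 - ‖x‖) * (N.factorial * Real.exp (1 + ‖x‖)) := by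
        gcongr
        · exact gss_le_exp x
        · exact (div_le_iff₀' (by positivity)).1
            (Real.pow_div_factorial_le_exp (1 + ‖x‖) (by positivity) N)
    _ = N.factorial * Real.exp 2 := by
        rw [mul_left_comm, ← Real.exp_add]
        ring_nf

lemma abs_ddg_mul_pow_le (i : Fin m) (x : Idx m → ℝ) (N : ℕ) :
    |ddg i x| * (1 + ‖x‖) ^ N ≤ 4 * Real.pi ^ 2 * ((N + 2).factorial * Real.exp 2) := by
  have hgss : 0 ≤ gss x := (Real.exp_pos _).le
  have hcoord (k : Idx m) : |x k| ≤ 1 + ‖x‖ :=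
    (norm_le_pi_norm x k).trans (le_add_of_nonneg_left zero_le_one)
  rw [ddg_eq, abs_mul, abs_mul, abs_mul (x _), abs_of_nonneg hgss,
    abs_of_pos (by positivity : 0 < 4 * Real.pi ^ 2)]
  calc 4 * Real.pi ^ 2 * (|x (Sum.inl i)| * |x (Sum.inr i)|) * gss x * (1 + ‖x‖) ^ N
      ≤ 4 * Real.pi ^ 2 * ((1 + ‖x‖) * (1 + ‖x‖)) * gss x * (1 + ‖x‖) ^ N := by
        gcongr <;> exact hcoord _
    _ = 4 * Real.pi ^ 2 * (gss x * (1 + ‖x‖) ^ (N + 2)) := by ring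
    _ ≤ 4 * Real.pi ^ 2 * ((N + 2).factorial * Real.exp 2) := by
        gcongr ?_ * ?_
        exact gss_mul_pow_le x (N + 2)

end KernelDecay

section Averages

lemma locallyIntegrable_abs_pow_of_bounded {X : Type*} [TopologicalSpace X] [MeasurableSpace X]
    {μ : Measure X} [IsLocallyFiniteMeasure μ] {f : X → ℝ} (hf : Measurable f)
    (hbdd : ∃ M, ∀ x, |f x| ≤ M) (N : ℕ) : LocallyIntegrable (fun x => |f x| ^ N) μ := by
  obtain ⟨M, hM⟩ := hbdd
  refine (locallyIntegrable_const (M ^ N)).mono (hf.norm.pow_const N).aestronglyMeasurable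
    (ae_of_all _ fun x => ?_)
  rw [norm_pow, norm_pow, Real.norm_eq_abs, Real.norm_eq_abs, abs_abs]
  refine pow_le_pow_left₀ (abs_nonneg _) ?_ N
  exact (hM x).trans (le_abs_self M)

variable {m : ℕ}

lemma two_zpow_one_sub (hm : m ≠ 0) :
    (2 : ℝ) ^ ((1 : ℤ) - (m : ℤ)) = ((2 ^ (m - 1) : ℕ) : ℝ)⁻¹ := by
  have hexp : (1 : ℤ) - m = -((m - 1 : ℕ) : ℤ) := by lia
  rw [hexp, _root_.zpow_neg, zpow_natCast, Nat.cast_pow, Nat.cast_ofNat]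

lemma lintegral_enorm_pow_rpow_eq_avg (hm : m ≠ 0) {S : Set (Fin m → ℝ)} (hS₀ : volume S ≠ 0)
    (hS : volume S ≠ ∞) {h : (Fin m → ℝ) → ℝ}
    (hh : IntegrableOn (fun x => |h x| ^ 2 ^ (m - 1)) S) :
    (∫⁻ x in S, ‖h x‖ₑ ^ 2 ^ (m - 1)) ^ ((2 ^ (m - 1) : ℕ) : ℝ)⁻¹ =
      volume S ^ ((2 ^ (m - 1) : ℕ) : ℝ)⁻¹ * ENNReal.ofReal (avg S h) := by
  have hnonneg : 0 ≤ ∫ x in S, |h x| ^ 2 ^ (m - 1) := integral_nonneg fun x => by positivity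
  have hpow : ENNReal.ofReal (∫ x in S, |h x| ^ 2 ^ (m - 1)) =
      ∫⁻ x in S, ‖h x‖ₑ ^ 2 ^ (m - 1) := by
    rw [ofReal_integral_eq_lintegral_ofReal hh (ae_of_all _ fun x => by positivity)]
    simp only [Real.enorm_eq_ofReal_abs, ENNReal.ofReal_pow (abs_nonneg _)]
  rw [avg, two_zpow_one_sub hm,
    ← ENNReal.ofReal_rpow_of_nonneg (mul_nonneg (by positivity) hnonneg) (by positivity),
    ← ENNReal.mul_rpow_of_nonneg _ _ (by positivity), ENNReal.ofReal_mul (by positivity), hpow,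
    ENNReal.ofReal_inv_of_pos (ENNReal.toReal_pos hS₀ hS), ENNReal.ofReal_toReal hS,
    ENNReal.mul_inv_cancel_left hS₀ hS]

lemma mulVec_injective_of_det_ne_zero {A : Matrix (Fin m) (Fin m) ℝ} (hA : A.det ≠ 0) :
    Function.Injective (A *ᵥ ·) :=
  Matrix.mulVec_injective_iff_isUnit.2 ((Matrix.isUnit_iff_isUnit_det A).2 hA.isUnit)

lemma hasFDerivAt_mulVec (A : Matrix (Fin m) (Fin m) ℝ) (x : Fin m → ℝ) :
    HasFDerivAt (A *ᵥ ·) (Matrix.toLin' A).toContinuousLinearMap x :=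
  (Matrix.toLin' A).toContinuousLinearMap.hasFDerivAt

lemma lintegral_image_mulVec {A : Matrix (Fin m) (Fin m) ℝ} (hA : A.det ≠ 0)
    {S : Set (Fin m → ℝ)} (hS : MeasurableSet S) (f : (Fin m → ℝ) → ℝ≥0∞) :
    ∫⁻ z in (A *ᵥ ·) '' S, f z = ENNReal.ofReal |A.det| * ∫⁻ y in S, f (A *ᵥ y) := by
  rw [lintegral_image_eq_lintegral_abs_det_fderiv_mul volume hS
    (fun x _ => (hasFDerivAt_mulVec A x).hasFDerivWithinAt)
    (mulVec_injective_of_det_ne_zero hA).injOn,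
    lintegral_const_mul' _ _ (by finiteness)]
  simp only [LinearMap.det_toContinuousLinearMap, LinearMap.det_toLin']

lemma integrableOn_comp_mulVec {A : Matrix (Fin m) (Fin m) ℝ} (hA : A.det ≠ 0)
    {S : Set (Fin m → ℝ)} (hS : MeasurableSet S) (hbdd : Bornology.IsBounded S)
    {f : (Fin m → ℝ) → ℝ} (hf : LocallyIntegrable f) :
    IntegrableOn (fun y => f (A *ᵥ y)) S := by
  have himage : Bornology.IsBounded ((A *ᵥ ·) '' S) :=
    (Matrix.toLin' A).toContinuousLinearMap.lipschitz.isBounded_image hbdd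
  have hint : IntegrableOn f ((A *ᵥ ·) '' S) :=
    (hf.integrableOn_isCompact himage.isCompact_closure).mono_set subset_closure
  rw [integrableOn_image_iff_integrableOn_abs_det_fderiv_smul volume hS
    (fun x _ => (hasFDerivAt_mulVec A x).hasFDerivWithinAt)
    (mulVec_injective_of_det_ne_zero hA).injOn] at hint
  simp only [LinearMap.det_toContinuousLinearMap, LinearMap.det_toLin'] at hint
  exact (integrable_smul_iff (abs_ne_zero.2 hA) _).1 hint

theorem lintegral_image_enorm_pow_rpow_eq_avg (hm : m ≠ 0) {A : Matrix (Fin m) (Fin m) ℝ}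
    (hA : A.det ≠ 0) {S : Set (Fin m → ℝ)} (hS : MeasurableSet S) (hS₀ : volume S ≠ 0)
    (hbdd : Bornology.IsBounded S) {F : (Fin m → ℝ) → ℝ}
    (hF : LocallyIntegrable fun z => |F z| ^ 2 ^ (m - 1)) :
    (∫⁻ z in (A *ᵥ ·) '' S, ‖F z‖ₑ ^ 2 ^ (m - 1)) ^ ((2 ^ (m - 1) : ℕ) : ℝ)⁻¹ =
      (ENNReal.ofReal |A.det| * volume S) ^ ((2 ^ (m - 1) : ℕ) : ℝ)⁻¹ *
        ENNReal.ofReal (avg S fun y => F (A *ᵥ y)) := by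
  rw [lintegral_image_mulVec hA hS, ENNReal.mul_rpow_of_nonneg _ _ (by positivity),
    ENNReal.mul_rpow_of_nonneg _ _ (by positivity), mul_assoc,
    lintegral_enorm_pow_rpow_eq_avg hm hS₀ hbdd.measure_lt_top.ne
      (integrableOn_comp_mulVec hA hS hbdd hF)]

end Averages

section OffDiagonal

variable {m : ℕ}

/-- The supremum of the averages `[h]_{Q*}` over all dyadic cubes `Q` with `Qt* ⊆ Q*`. -/
def supStarAvg (Qt : ℤ × (Fin m → ℤ)) (h : (Fin m → ℝ) → ℝ) : ℝ≥0∞ :=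
  ⨆ (Q : ℤ × (Fin m → ℤ)) (_ : dCstar Qt ⊆ dCstar Q), ENNReal.ofReal (avg (dCstar Q) h)

lemma ofReal_avg_le_supStarAvg {Qt Q : ℤ × (Fin m → ℤ)} (hQ : dCstar Qt ⊆ dCstar Q)
    (h : (Fin m → ℝ) → ℝ) : ENNReal.ofReal (avg (dCstar Q) h) ≤ supStarAvg Qt h :=
  le_iSup₂ (f := fun Q (_ : dCstar Qt ⊆ dCstar Q) => ENNReal.ofReal (avg (dCstar Q) h)) Q hQ

theorem setLIntegral_prod_proj_le_supStarAvg (hm : m ≠ 0) {J : Matrix (Idx m) (Fin m) ℝ} {D : ℝ}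
    (hdet : ∀ j, (Amat J j).det ≠ 0) (hD : ∀ j, |(Amat J j).det| ≤ D)
    {F : Corner m → (Fin m → ℝ) → ℝ} (hF : ∀ j, Measurable (F j))
    (hFint : ∀ j, LocallyIntegrable fun z => |F j z| ^ 2 ^ (m - 1))
    {Qt Q : ℤ × (Fin m → ℤ)} (hQ : dCstar Qt ⊆ dCstar Q) {E : Set (Idx m → ℝ)}
    (hE : ∀ x ∈ E, ∀ j, proj j x ∈ (Amat J j *ᵥ ·) '' dCstar Q) :
    ∫⁻ x in E, ∏ j, ‖F j (proj j x)‖ₑ ≤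
      (ENNReal.ofReal D * volume (dCstar Q)) ^ 2 *
        ∏ j, supStarAvg Qt fun y => F j (Amat J j *ᵥ y) := by
  have himage (j : Corner m) : MeasurableSet ((Amat J j *ᵥ ·) '' dCstar Q) :=
    (measurableSet_dCstar Q).image_of_continuousOn_injOn
      (Matrix.toLin' (Amat J j)).toContinuousLinearMap.continuous.continuousOn
      (mulVec_injective_of_det_ne_zero (hdet j)).injOn
  calc ∫⁻ x in E, ∏ j, ‖F j (proj j x)‖ₑ
      ≤ ∏ j, (∫⁻ z in (Amat J j *ᵥ ·) '' dCstar Q, ‖F j z‖ₑ ^ 2 ^ (m - 1)) ^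
          ((2 ^ (m - 1) : ℕ) : ℝ)⁻¹ :=
        setLIntegral_prod_proj_le himage hE fun j => (hF j).enorm
    _ ≤ ∏ j, (ENNReal.ofReal D * volume (dCstar Q)) ^ ((2 ^ (m - 1) : ℕ) : ℝ)⁻¹ *
          supStarAvg Qt fun y => F j (Amat J j *ᵥ y) := by
        refine Finset.prod_le_prod' fun j _ => ?_
        rw [lintegral_image_enorm_pow_rpow_eq_avg hm (hdet j) (measurableSet_dCstar Q)
          (volume_dCstar_ne_zero Q) (isBounded_dCstar Q) (hFint j)]
        gcongr
        · exact hD j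
        · exact ofReal_avg_le_supStarAvg hQ _
    _ = (ENNReal.ofReal D * volume (dCstar Q)) ^ 2 *
          ∏ j, supStarAvg Qt fun y => F j (Amat J j *ᵥ y) := by
        rw [Finset.prod_mul_distrib, Finset.prod_const, Finset.card_univ,
          ← ENNReal.rpow_mul_natCast, inv_pow_mul_card_corner hm, ENNReal.rpow_natCast]

variable {J : Matrix (Idx m) (Fin m) ℝ} {D K : ℝ} {F : Corner m → (Fin m → ℝ) → ℝ}
  {Qt : ℤ × (Fin m → ℤ)} {p : Fin m → ℝ}

lemma det_ne_zero_of_norm_le_mul_norm_mulVec {A : Matrix (Fin m) (Fin m) ℝ}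
    (hA : ∀ v, ‖v‖ ≤ K * ‖A *ᵥ v‖) : A.det ≠ 0 := fun hdet => by
  obtain ⟨v, hv, hAv⟩ := Matrix.exists_mulVec_eq_zero_iff.2 hdet
  have hv' := hA v
  rw [hAv, norm_zero, mul_zero] at hv'
  exact hv (norm_le_zero_iff.1 hv')

lemma exists_mulVec_eq_proj_norm_sub_le (hK₀ : 0 < K) {j : Corner m}
    (hK : ∀ v, ‖v‖ ≤ K * ‖Amat J j *ᵥ v‖) (x : Idx m → ℝ) (p : Fin m → ℝ) :
    ∃ y, Amat J j *ᵥ y = proj j x ∧ ‖y - p‖ ≤ K * ‖x - J *ᵥ p‖ := by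
  have hdet := det_ne_zero_of_norm_le_mul_norm_mulVec hK
  obtain ⟨y, hy⟩ := Matrix.mulVec_surjective_iff_isUnit.2
    ((Matrix.isUnit_iff_isUnit_det _).2 hdet.isUnit) (proj j x)
  refine ⟨y, hy, (hK (y - p)).trans ?_⟩
  rw [Matrix.mulVec_sub, hy, ← proj_sub_mulVec]
  gcongr
  exact norm_proj_le j _

theorem setLIntegral_closedBall_prod_proj_le (hm : m ≠ 0) (hK₀ : 0 < K)
    (hK : ∀ j v, ‖v‖ ≤ K * ‖Amat J j *ᵥ v‖) (hD : ∀ j, |(Amat J j).det| ≤ D)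
    (hF : ∀ j, Measurable (F j)) (hFint : ∀ j, LocallyIntegrable fun z => |F j z| ^ 2 ^ (m - 1))
    (hp : p ∈ dC Qt) (n : ℕ) :
    ∫⁻ x in Metric.closedBall (J *ᵥ p) (2 ^ n * (2 ^ Qt.1 / K)), ∏ j, ‖F j (proj j x)‖ₑ ≤
      ENNReal.ofReal ((D * (3 * 2 ^ Qt.1) ^ m) ^ 2) *
        (∏ j, supStarAvg Qt fun y => F j (Amat J j *ᵥ y)) *
        ENNReal.ofReal ((2 ^ n) ^ (2 * m)) := by
  have hD₀ : 0 ≤ D := (abs_nonneg _).trans (hD 0)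
  have hmem (x : Idx m → ℝ) (hx : x ∈ Metric.closedBall (J *ᵥ p) (2 ^ n * (2 ^ Qt.1 / K)))
      (j : Corner m) : proj j x ∈ (Amat J j *ᵥ ·) '' dCstar (ancestor Qt n) := by
    obtain ⟨y, hy, hyp⟩ := exists_mulVec_eq_proj_norm_sub_le hK₀ (hK j) x p
    refine ⟨y, mem_dCstar_ancestor hp (hyp.trans ?_), hy⟩
    calc K * ‖x - J *ᵥ p‖ ≤ K * (2 ^ n * (2 ^ Qt.1 / K)) := by
          gcongr
          exact mem_closedBall_iff_norm.1 hx
      _ = 2 ^ n * 2 ^ Qt.1 := by field_simp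
  refine (setLIntegral_prod_proj_le_supStarAvg hm
    (fun j => det_ne_zero_of_norm_le_mul_norm_mulVec (hK j)) hD hF hFint
    (dCstar_subset_ancestor Qt n) hmem).trans_eq ?_
  rw [volume_dCstar, side_ancestor, ← ENNReal.ofReal_pow (by positivity),
    ← ENNReal.ofReal_mul hD₀, ← ENNReal.ofReal_pow (by positivity), mul_right_comm,
    ← ENNReal.ofReal_mul (by positivity)]
  congr 2
  ring

/-- The constant of the off-diagonal estimate when `|det A_j| ≤ D`, `|v| ≤ K |A_j v|` in the
supremum norm, and the kernel is bounded by `M (1 + |x|)^{-4m}`. -/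
def offDiagConst (m : ℕ) (D K M : ℝ) : ℝ :=
  2 ^ (6 * m + 1) * 3 ^ (2 * m) * D ^ 2 * K ^ (4 * m) * M

theorem lintegral_prod_proj_mul_dil_le (hm : m ≠ 0) (hK₀ : 0 < K)
    (hK : ∀ j v, ‖v‖ ≤ K * ‖Amat J j *ᵥ v‖) (hD : ∀ j, |(Amat J j).det| ≤ D)
    (hF : ∀ j, Measurable (F j)) (hFint : ∀ j, LocallyIntegrable fun z => |F j z| ^ 2 ^ (m - 1))
    {j₀ : Corner m}
    (hj₀ : Disjoint (Function.support fun y => F j₀ (Amat J j₀ *ᵥ y)) (dCstar Qt))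
    (hp : p ∈ dC Qt) {φ : (Idx m → ℝ) → ℝ} {M : ℝ}
    (hφ : ∀ x, |φ x| * (1 + ‖x‖) ^ (4 * m) ≤ M) {t : ℝ} (ht : 0 < t) (u : Idx m → ℝ) :
    ∫⁻ x, (∏ j, ‖F j (proj j x)‖ₑ) * ‖dil t φ (x - J *ᵥ p + t • u)‖ₑ ≤
      ENNReal.ofReal (offDiagConst m D K M * (1 + en u ^ (4 * m)) * (t / 2 ^ Qt.1) ^ (2 * m)) *
        ∏ j, supStarAvg Qt fun y => F j (Amat J j *ᵥ y) := by
  have hM : 0 ≤ M := le_trans (by positivity) (hφ 0)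
  have hen : 0 ≤ en u := Real.sqrt_nonneg _
  have hsupp (x : Idx m → ℝ) (hx : ∏ j, ‖F j (proj j x)‖ₑ ≠ 0) :
      2 ^ Qt.1 / K ≤ dist x (J *ᵥ p) := by
    obtain ⟨y, hy, hyp⟩ := exists_mulVec_eq_proj_norm_sub_le hK₀ (hK j₀) x p
    have hFy : F j₀ (Amat J j₀ *ᵥ y) ≠ 0 := by
      rw [hy]
      exact enorm_ne_zero.1 (Finset.prod_ne_zero_iff.1 hx j₀ (Finset.mem_univ _))
    rw [dist_eq_norm, div_le_iff₀' hK₀]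
    exact (side_le_norm_sub hp (Set.disjoint_left.1 hj₀ hFy)).trans hyp
  refine (lintegral_mul_enorm_le_of_lintegral_closedBall_le (by positivity)
    (Finset.measurable_prod _ fun j _ => ((hF j).comp (measurable_proj j)).enorm) hsupp
    (by lia : 2 * m < 4 * m) (setLIntegral_closedBall_prod_proj_le hm hK₀ hK hD hF hFint hp)
    (B := 2 ^ (4 * m) * M * (1 + en u ^ (4 * m)) * t ^ (2 * m)) (by positivity)
    fun x => ?_).trans_eq ?_
  · rw [dist_eq_norm]
    exact abs_dil_mul_norm_pow_le hφ ht _ u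
  · rw [mul_right_comm, ← ENNReal.ofReal_mul (by positivity), offDiagConst]
    congr 2
    have hsq : ((2 : ℝ) ^ Qt.1) ^ (4 * m) = (2 ^ Qt.1) ^ (2 * m) * (2 ^ Qt.1) ^ (2 * m) := by
      ring
    rw [div_pow, div_pow, hsq]
    field_simp
    ring

theorem enorm_integral_prod_proj_mul_dil_le (hm : m ≠ 0) (hK₀ : 0 < K)
    (hK : ∀ j v, ‖v‖ ≤ K * ‖Amat J j *ᵥ v‖) (hD : ∀ j, |(Amat J j).det| ≤ D)
    (hF : ∀ j, Measurable (F j)) (hFint : ∀ j, LocallyIntegrable fun z => |F j z| ^ 2 ^ (m - 1))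
    {j₀ : Corner m}
    (hj₀ : Disjoint (Function.support fun y => F j₀ (Amat J j₀ *ᵥ y)) (dCstar Qt))
    (hp : p ∈ dC Qt) {φ : (Idx m → ℝ) → ℝ} {M : ℝ}
    (hφ : ∀ x, |φ x| * (1 + ‖x‖) ^ (4 * m) ≤ M) {t : ℝ} (ht : 0 < t) (htQ : t ≤ 2 ^ Qt.1)
    (u : Idx m → ℝ) :
    ‖∫ x, (∏ j, F j (proj j x)) * dil t φ (x - J *ᵥ p + t • u)‖ₑ ≤
      ENNReal.ofReal ((1 + en u ^ (4 * m)) * (t / 2 ^ Qt.1)) *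
        (ENNReal.ofReal (offDiagConst m D K M) *
          ∏ j, supStarAvg Qt fun y => F j (Amat J j *ᵥ y)) := by
  have hM : 0 ≤ M := le_trans (by positivity) (hφ 0)
  have hC : 0 ≤ offDiagConst m D K M := by unfold offDiagConst; positivity
  have hen : 0 ≤ en u := Real.sqrt_nonneg _
  have hpow : (t / 2 ^ Qt.1) ^ (2 * m) ≤ t / 2 ^ Qt.1 :=
    pow_le_of_le_one (by positivity) ((div_le_one₀ (by positivity)).2 htQ)
      (mul_ne_zero two_ne_zero hm)
  calc ‖∫ x, (∏ j, F j (proj j x)) * dil t φ (x - J *ᵥ p + t • u)‖ₑ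
      ≤ ∫⁻ x, (∏ j, ‖F j (proj j x)‖ₑ) * ‖dil t φ (x - J *ᵥ p + t • u)‖ₑ := by
        refine (enorm_integral_le_lintegral_enorm _).trans_eq (lintegral_congr fun x => ?_)
        simp only [enorm_eq_nnnorm, nnnorm_mul, nnnorm_prod, ENNReal.coe_mul,
          ENNReal.ofNNReal_finsetProd]
    _ ≤ ENNReal.ofReal (offDiagConst m D K M * (1 + en u ^ (4 * m)) *
          (t / 2 ^ Qt.1) ^ (2 * m)) * ∏ j, supStarAvg Qt fun y => F j (Amat J j *ᵥ y) :=
        lintegral_prod_proj_mul_dil_le hm hK₀ hK hD hF hFint hj₀ hp hφ ht u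
    _ ≤ ENNReal.ofReal ((1 + en u ^ (4 * m)) * (t / 2 ^ Qt.1)) *
          (ENNReal.ofReal (offDiagConst m D K M) *
            ∏ j, supStarAvg Qt fun y => F j (Amat J j *ᵥ y)) := by
        rw [← mul_assoc, ← ENNReal.ofReal_mul (by positivity), mul_comm (_ * (t / _)),
          ← mul_assoc]
        gcongr

end OffDiagonal

section Tree

variable {m : ℕ} {T : Set (ℤ × (Fin m → ℤ))} {Qt : ℤ × (Fin m → ℤ)}

lemma Omega_subset (hm : m ≠ 0) (hT : ∀ Q ∈ T, dC Q ⊆ dC Qt) :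
    Omega T ⊆ dC Qt ×ˢ Set.Ioc 0 (2 ^ Qt.1) :=
  Set.iUnion₂_subset fun Q hQ => Set.prod_mono (hT Q hQ) fun _ ht =>
    ⟨lt_trans (by positivity) ht.1, ht.2.le.trans (side_le_of_dC_subset hm (hT Q hQ))⟩

theorem enorm_LambdaT_le (hm : m ≠ 0) (hT : ∀ Q ∈ T, dC Q ⊆ dC Qt) {c : ℝ → ℂ}
    (hc : ∀ᵐ t ∂volume.restrict (Set.Ioi 0), ‖c t‖ ≤ 1) {J : Matrix (Idx m) (Fin m) ℝ}
    {u : Idx m → ℝ} {i : Fin m} {F : Corner m → (Fin m → ℝ) → ℝ} {B : ℝ≥0∞}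
    (hB : ∀ p ∈ dC Qt, ∀ t, 0 < t → t ≤ 2 ^ Qt.1 →
      ‖∫ x, (∏ j, F j (proj j x)) * dil t (ddg i) (x - J *ᵥ p + t • u)‖ₑ ≤
        ENNReal.ofReal ((1 + en u ^ (4 * m)) * (t / 2 ^ Qt.1)) * B) :
    ‖LambdaT J T c u i F‖ₑ ≤ B * volume (dC Qt) := by
  have hen : 0 ≤ en u := Real.sqrt_nonneg _
  have hc' : ∀ᵐ z : (Fin m → ℝ) × ℝ, 0 < z.2 → ‖c z.2‖ ≤ 1 :=
    Measure.quasiMeasurePreserving_snd.ae ((ae_restrict_iff' measurableSet_Ioi).1 hc)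
  calc ‖LambdaT J T c u i F‖ₑ
      ≤ ∫⁻ z in dC Qt ×ˢ Set.Ioc 0 (2 ^ Qt.1), ‖c z.2 * Complex.ofReal
          ((1 + en u ^ (4 * m))⁻¹ * (z.2)⁻¹ * ∫ x, (∏ j, F j (proj j x)) *
            dil z.2 (ddg i) (x - J *ᵥ z.1 + z.2 • u))‖ₑ :=
        (enorm_integral_le_lintegral_enorm _).trans (lintegral_mono_set (Omega_subset hm hT))
    _ ≤ ∫⁻ _ in dC Qt ×ˢ Set.Ioc (0 : ℝ) (2 ^ Qt.1), ENNReal.ofReal (2 ^ Qt.1)⁻¹ * B := by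
        refine lintegral_mono_ae ((ae_restrict_iff'
          ((measurableSet_dC Qt).prod measurableSet_Ioc)).2 ?_)
        filter_upwards [hc'] with ⟨p, t⟩ hct ⟨hp, ht, htQ⟩
        have hct' : ‖c t‖ₑ ≤ 1 := by
          rw [← ofReal_norm]
          exact ENNReal.ofReal_le_one.2 (hct ht)
        have henorm_ofReal (r : ℝ) : ‖(r : ℂ)‖ₑ = ‖r‖ₑ :=
          congrArg ENNReal.ofNNReal (Complex.nnnorm_real r)
        rw [enorm_mul, henorm_ofReal, enorm_mul, Real.enorm_of_nonneg (by positivity)]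
        refine (mul_le_mul' hct' (mul_le_mul_right (hB p hp t ht htQ) _)).trans_eq ?_
        rw [one_mul, ← mul_assoc, ← ENNReal.ofReal_mul (by positivity)]
        congr 2
        field_simp
    _ = B * volume (dC Qt) := by
        have hside : ENNReal.ofReal (2 ^ Qt.1)⁻¹ * ENNReal.ofReal (2 ^ Qt.1) = 1 := by
          rw [← ENNReal.ofReal_mul (by positivity), inv_mul_cancel₀ (by positivity),
            ENNReal.ofReal_one]
        rw [setLIntegral_const, Measure.volume_eq_prod, Measure.prod_prod, Real.volume_Ioc,
          sub_zero, mul_comm (volume (dC Qt)), mul_mul_mul_comm, hside, one_mul]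

end Tree

theorem statement9_general (m : ℕ) (Δ : ℝ) :
    ∃ C : ℝ≥0, ∀ J : Matrix (Idx m) (Fin m) ℝ, (∀ j : Corner m, IsReg Δ (Amat J j)) →
      ∀ (T : Set (ℤ × (Fin m → ℤ))) (Qt : ℤ × (Fin m → ℤ)), (∀ Q ∈ T, dC Q ⊆ dC Qt) →
      ∀ c : ℝ → ℂ, Measurable c →
        (∀ᵐ t ∂volume.restrict (Set.Ioi 0), ‖c t‖ ≤ 1) →
      ∀ (u : Idx m → ℝ) (i : Fin m) (F : Corner m → (Fin m → ℝ) → ℝ),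
        (∀ j, Measurable (F j)) → (∀ j, LocallyIntegrable fun z => |F j z| ^ 2 ^ (m - 1)) →
        (∃ j₀, Disjoint (Function.support fun y => F j₀ (Amat J j₀ *ᵥ y)) (dCstar Qt)) →
        ‖LambdaT J T c u i F‖ₑ ≤
          C * volume (dC Qt) * ∏ j, supStarAvg Qt fun y => F j (Amat J j *ᵥ y) := by
  obtain ⟨K, hK₀, hK⟩ := exists_norm_le_mul_norm_mulVec_of_isReg m Δ
  refine ⟨(offDiagConst m (m.factorial * Δ ^ m) K
    (4 * Real.pi ^ 2 * ((4 * m + 2).factorial * Real.exp 2))).toNNReal,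
    fun J hJ T Qt hT c _ hc u i F hF hFint ⟨j₀, hj₀⟩ => ?_⟩
  rw [mul_right_comm]
  exact enorm_LambdaT_le i.pos.ne' hT hc fun p hp t ht htQ =>
    enorm_integral_prod_proj_mul_dil_le i.pos.ne' hK₀ (fun j => hK _ (hJ j))
      (fun j => (hJ j).abs_det_le) hF hFint hj₀ hp
      (fun x => abs_ddg_mul_pow_le i x (4 * m)) ht htQ u

/-- Lemma (off-diagonal estimate for a tree). -/
theorem statement9 (m : ℕ) (hm : 2 ≤ m) (Δ : ℝ) (hΔ : 1 < Δ) :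
    ∃ C : ℝ≥0, ∀ J : Matrix (Idx m) (Fin m) ℝ, IsUnit (Jb1 J).det →
      (∀ j : Corner m, IsReg Δ (Amat J j)) →
      ∀ (T : Set (ℤ × (Fin m → ℤ))) (Qt : ℤ × (Fin m → ℤ)), ConvexTree T Qt →
      ∀ c : ℝ → ℂ, Measurable c →
        (∀ᵐ t ∂(volume.restrict (Set.Ioi (0:ℝ))), ‖c t‖ ≤ 1) →
      ∀ u : Idx m → ℝ, ∀ i : Fin m,
      ∀ F : Corner m → (Fin m → ℝ) → ℝ,
        (∀ j, Measurable (F j) ∧ HasCompactSupport (F j) ∧ ∃ M : ℝ, ∀ x, |F j x| ≤ M) →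
        (∃ j0 : Corner m,
          Disjoint (Function.support fun x => F j0 ((Amat J j0).mulVec x)) (dCstar Qt)) →
        ENNReal.ofReal ‖LambdaT J T c u i F‖ ≤
          C * volume (dC Qt) * ∏ j : Corner m,
            ⨆ (Q : ℤ × (Fin m → ℤ)) (_ : dCstar Qt ⊆ dCstar Q),
              ENNReal.ofReal (avg (dCstar Q) fun x => F j ((Amat J j).mulVec x)) := by
  obtain ⟨C, hC⟩ := statement9_general m Δ
  refine ⟨C, fun J _ hJ T Qt hT c hc hc' u i F hF hdisj => ?_⟩
  rw [ofReal_norm]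
  exact hC J hJ T Qt hT.2.1 c hc hc' u i F (fun j => (hF j).1)
    (fun j => locallyIntegrable_abs_pow_of_bounded (hF j).1 (hF j).2.2 _) hdisj

end SBL
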